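/- arXiv:1308.5074 — 3 statements merged into one kernel-verified Lean document; each statement's English description precedes it below -/
import Mathlib

section
/- Let k > n be positive integers, let E ⊆ ℝ^k be a Lebesgue-measurable set, and let f : E → ℝ^{2n+1} be Lipschitz as a map from E (with the Euclidean metric) to (ℝ^{2n+1}, d_K). Then the k-dimensional Hausdorff measure of f(E) with respect to the metric d_K is zero. -/
open MeasureTheory Metric Set
open scoped ENNReal NNReal

noncomputable section

abbrev Heis (n : ℕ) := EuclideanSpace ℝ (Fin (2*n+1))
abbrev Horiz (n : ℕ) := EuclideanSpace ℝ (Fin (2*n))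

def xIdx (n : ℕ) (j : Fin n) : Fin (2*n+1) := ⟨2*j.1, by have := j.2; omega⟩
def yIdx (n : ℕ) (j : Fin n) : Fin (2*n+1) := ⟨2*j.1+1, by have := j.2; omega⟩
def tIdx (n : ℕ) : Fin (2*n+1) := ⟨2*n, by omega⟩
def xIdx2 (n : ℕ) (j : Fin n) : Fin (2*n) := ⟨2*j.1, by have := j.2; omega⟩
def yIdx2 (n : ℕ) (j : Fin n) : Fin (2*n) := ⟨2*j.1+1, by have := j.2; omega⟩

/-- The Korányi distance on the Heisenberg group `ℍ^n = ℝ^{2n+1}`. -/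
def dK (n : ℕ) (p q : Heis n) : ℝ :=
  ((∑ j : Fin n, ((p (xIdx n j) - q (xIdx n j))^2 + (p (yIdx n j) - q (yIdx n j))^2))^2
    + (p (tIdx n) - q (tIdx n)
        + 2 * ∑ j : Fin n, (q (xIdx n j) * p (yIdx n j) - p (xIdx n j) * q (yIdx n j)))^2)
    ^ ((1:ℝ)/4)

/-- The kernel of the standard contact form `α = dt + 2∑ (x_j dy_j − y_j dx_j)` at `p`. -/
def kerAlpha (n : ℕ) (p : Heis n) : Set (Heis n) :=
  {v | v (tIdx n)
    + 2 * ∑ j : Fin n, (p (xIdx n j) * v (yIdx n j) - p (yIdx n j) * v (xIdx n j)) = 0}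

/-- The standard symplectic form on `ℝ^{2n}`. -/
def omegaF (n : ℕ) (v w : Horiz n) : ℝ :=
  ∑ j : Fin n, (v (xIdx2 n j) * w (yIdx2 n j) - v (yIdx2 n j) * w (xIdx2 n j))

/-- The projection `π : ℝ^{2n+1} → ℝ^{2n}` forgetting the `t`-coordinate. -/
def piH (n : ℕ) (p : Heis n) : Horiz n :=
  (EuclideanSpace.equiv (Fin (2*n)) ℝ).symm (fun i => p ⟨i.1, by have := i.2; omega⟩)

/-- Diameter of a set with respect to the Korányi distance, as an extended real. -/
def kDiam (n : ℕ) (U : Set (Heis n)) : ℝ≥0∞ :=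
  ⨆ p ∈ U, ⨆ q ∈ U, ENNReal.ofReal (dK n p q)

/-- `S` is null for the `k`-dimensional Hausdorff measure built from the Korányi
distance: its `k`-dimensional Hausdorff content is arbitrarily small. -/
def IsHausdorffNullK (n k : ℕ) (S : Set (Heis n)) : Prop :=
  ∀ ε : ℝ≥0∞, 0 < ε → ∃ U : ℕ → Set (Heis n),
    (S ⊆ ⋃ i, U i) ∧ ∑' i, (kDiam n (U i)) ^ k < ε

/-- `f` is Lipschitz on `E` as a map into `(ℝ^{2n+1}, d_K)`. -/
def LipschitzOnK (n : ℕ) {k : ℕ} (f : EuclideanSpace ℝ (Fin k) → Heis n)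
    (E : Set (EuclideanSpace ℝ (Fin k))) : Prop :=
  ∃ L : ℝ, 0 ≤ L ∧ ∀ x ∈ E, ∀ y ∈ E, dK n (f x) (f y) ≤ L * dist x y

end

/-!
Let `z` be the horizontal part of `f`, a Lipschitz map into `ℝ^{2n}`, and let `x` be a density point
of `E` at which `z` is differentiable along `E`, with derivative `A`. Precomposing `f` with an
almost-nearest-point retraction onto `E`, which is differentiable at `x` with derivative the
identity, makes `z` differentiable at `x` on a full neighbourhood.

The vertical coordinate `h y w` of `(f y)⁻¹ * f w` is bounded by a multiple of `|y - w| ^ 2`, and it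
is additive up to the symplectic form of the increments of `z`. Cutting a segment at its midpoint,
the two increments of `z` agree to first order, so the symplectic term is negligible, while the sum
of the squares of the two lengths is half the square of the whole. Each bisection therefore halves
the constant, and `h` is `o(r ^ 2)` on the balls of radius `r` around `x`. It follows that the range
of `A` is isotropic for the symplectic form, hence of dimension at most `n < k`.

So the image of such a ball lies within Korányi distance `o(r)` of an object of dimension less
than `k`, and its `k`-dimensional content is `o(r ^ k)`. As this happens at almost every point of
`E`, while the content is `O(r ^ k)` at all of them, Vitali's covering theorem finishes the proof.
-/

open Filter Topology TopologicalSpace Asymptotics Module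

section OuterMeasure

theorem outerMeasure_le_mul_measure_of_isOpen {X : Type*} [PseudoMetricSpace X]
    [SeparableSpace X] [MeasurableSpace X] [OpensMeasurableSpace X] {μ : Measure X}
    {F : OuterMeasure X} {c : ℝ≥0∞} {S U : Set X} (hU : IsOpen U) (hSU : S ⊆ U)
    (h : ∀ x ∈ S, ∃ᶠ r in 𝓝[>] (0 : ℝ), F (closedBall x (5 * r)) ≤ c * μ (closedBall x r)) :
    F S ≤ c * μ U := by
  have hradius : ∀ x ∈ S, ∃ r, 0 < r ∧ r ≤ 1 ∧ closedBall x r ⊆ U ∧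
      F (closedBall x (5 * r)) ≤ c * μ (closedBall x r) := by
    intro x hx
    obtain ⟨ρ, hρ, hρU⟩ := Metric.isOpen_iff.1 hU x (hSU hx)
    obtain ⟨r, hF, hr, hrρ⟩ :=
      ((h x hx).and_eventually (Ioo_mem_nhdsGT (lt_min one_pos hρ))).exists
    exact ⟨r, hr, (hrρ.trans_le (min_le_left _ _)).le,
      (closedBall_subset_ball (hrρ.trans_le (min_le_right _ _))).trans hρU, hF⟩
  choose! r hr hr1 hrU hF using hradius
  obtain ⟨u, huS, hdisj, hcov⟩ := Vitali.exists_disjoint_subfamily_covering_enlargement_closedBall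
    S id r 1 hr1 5 (by norm_num)
  replace hdisj : u.PairwiseDisjoint fun x => closedBall x (r x) := hdisj
  have hcount : u.Countable := hdisj.countable_of_nonempty_interior fun x hx =>
    ⟨x, ball_subset_interior_closedBall (mem_ball_self (hr x (huS hx)))⟩
  calc F S ≤ F (⋃ x ∈ u, closedBall x (5 * r x)) := by
        refine F.mono fun x hx => ?_
        obtain ⟨b, hb, hsub⟩ := hcov x hx
        exact mem_biUnion hb (hsub (mem_closedBall_self (hr x hx).le))
    _ ≤ ∑' x : u, F (closedBall (x : X) (5 * r x)) := measure_biUnion_le F hcount _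
    _ ≤ ∑' x : u, c * μ (closedBall (x : X) (r x)) := ENNReal.tsum_le_tsum fun x => hF x (huS x.2)
    _ = c * μ (⋃ x ∈ u, closedBall x (r x)) := by
        rw [ENNReal.tsum_mul_left,
          measure_biUnion hcount hdisj fun x _ => isClosed_closedBall.measurableSet]
    _ ≤ c * μ U := by
        gcongr
        exact iUnion₂_subset fun x hx => hrU x (huS hx)

theorem outerMeasure_le_mul_measure_of_frequently {X : Type*} [PseudoMetricSpace X]
    [SeparableSpace X] [MeasurableSpace X] [OpensMeasurableSpace X] {μ : Measure X}
    [μ.OuterRegular] {F : OuterMeasure X} {c : ℝ≥0∞} (hc : c ≠ ∞) {S : Set X}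
    (h : ∀ x ∈ S, ∃ᶠ r in 𝓝[>] (0 : ℝ), F (closedBall x (5 * r)) ≤ c * μ (closedBall x r)) :
    F S ≤ c * μ S := by
  have : Nonempty {U : Set X // S ⊆ U ∧ IsOpen U} := ⟨⟨univ, subset_univ S, isOpen_univ⟩⟩
  have hinf : μ S = ⨅ U : {U : Set X // S ⊆ U ∧ IsOpen U}, μ U := by
    simp only [S.measure_eq_iInf_isOpen μ, iInf_subtype, iInf_and]
  rw [hinf, ENNReal.mul_iInf fun h => absurd h hc]
  exact le_iInf fun U => outerMeasure_le_mul_measure_of_isOpen U.2.2 U.2.1 h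

variable {V : Type*} [NormedAddCommGroup V] [NormedSpace ℝ V] [FiniteDimensional ℝ V]
  {F : OuterMeasure V} {S : Set V}

theorem outerMeasure_le_mul_addHaar_of_frequently [MeasurableSpace V] [BorelSpace V]
    (μ : Measure V) [μ.IsAddHaarMeasure] {c : ℝ≥0}
    (h : ∀ x ∈ S, ∃ᶠ r in 𝓝[>] (0 : ℝ),
      F (closedBall x r) ≤ c * ENNReal.ofReal r ^ finrank ℝ V) :
    F S ≤ c * (5 ^ finrank ℝ V / μ (closedBall 0 1)) * μ S := by
  have hμ0 : μ (closedBall 0 1) ≠ 0 := (measure_closedBall_pos μ _ one_pos).ne'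
  have hμ : μ (closedBall 0 1) ≠ ∞ := measure_closedBall_lt_top.ne
  refine outerMeasure_le_mul_measure_of_frequently (by finiteness) fun x hx => ?_
  have hscale : Tendsto (fun r : ℝ => r / 5) (𝓝[>] 0) (𝓝[>] 0) := by
    refine tendsto_nhdsWithin_iff.2 ⟨?_, eventually_mem_nhdsWithin.mono fun r hr => ?_⟩
    · exact tendsto_nhdsWithin_of_tendsto_nhds (Continuous.tendsto' (by fun_prop) _ _ (by simp))
    · exact div_pos (show 0 < r from hr) (by norm_num)
  refine hscale.frequently (((h x hx).and_eventually self_mem_nhdsWithin).mono ?_)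
  rintro r ⟨hF, hr : 0 < r⟩
  rw [mul_div_cancel₀ r (by norm_num)]
  have hball : μ (closedBall x (r / 5)) =
      ENNReal.ofReal r ^ finrank ℝ V / 5 ^ finrank ℝ V * μ (closedBall 0 1) := by
    rw [Measure.addHaar_closedBall' μ x (by positivity), ENNReal.ofReal_pow (by positivity),
      ENNReal.ofReal_div_of_pos (by norm_num), ENNReal.ofReal_ofNat]
    simp only [div_eq_mul_inv, mul_pow, ENNReal.inv_pow]
  refine hF.trans_eq ?_
  rw [hball, mul_assoc, mul_comm (_ / _) (μ _), ← mul_assoc (_ / _), ENNReal.div_mul_cancel hμ0 hμ,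
    ENNReal.mul_div_cancel (by simp) (by finiteness)]

theorem outerMeasure_eq_zero_of_frequently
    (h : ∀ x ∈ S, ∀ c : ℝ≥0, 0 < c → ∃ᶠ r in 𝓝[>] (0 : ℝ),
      F (closedBall x r) ≤ c * ENNReal.ofReal r ^ finrank ℝ V) :
    F S = 0 := by
  borelize V
  let μ : Measure V := Measure.addHaar
  have hfinite : ∀ j, F (S ∩ spanningSets μ j) = 0 := by
    intro j
    set K : ℝ≥0∞ := 5 ^ finrank ℝ V / μ (closedBall 0 1) * μ (S ∩ spanningSets μ j)
    have hK : K ≠ ∞ := by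
      have := (measure_closedBall_pos μ (0 : V) one_pos).ne'
      have := measure_ne_top_of_subset (inter_subset_right (s := S))
        (measure_spanningSets_lt_top μ j).ne
      finiteness
    have hle : ∀ c : ℝ≥0, 0 < c → F (S ∩ spanningSets μ j) ≤ c * K := fun c hc =>
      (outerMeasure_le_mul_addHaar_of_frequently μ fun x hx => h x hx.1 c hc).trans_eq
        (mul_assoc _ _ _)
    have hlim : Tendsto (fun c : ℝ≥0 => c * K) (𝓝[>] 0) (𝓝 0) := by
      refine tendsto_nhdsWithin_of_tendsto_nhds ?_
      simpa using ENNReal.Tendsto.mul_const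
        (ENNReal.tendsto_coe.2 (tendsto_id (x := 𝓝 (0 : ℝ≥0)))) (.inr hK)
    exact le_zero_iff.1 (ge_of_tendsto hlim (eventually_mem_nhdsWithin.mono hle))
  rw [← inter_univ S, ← iUnion_spanningSets μ, inter_iUnion]
  exact measure_iUnion_null hfinite

theorem outerMeasure_eq_zero_of_ae_frequently [MeasurableSpace V] [BorelSpace V]
    (μ : Measure V) [μ.IsAddHaarMeasure] {C : ℝ≥0}
    (hC : ∀ x ∈ S, ∃ᶠ r in 𝓝[>] (0 : ℝ),
      F (closedBall x r) ≤ C * ENNReal.ofReal r ^ finrank ℝ V)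
    (h : ∀ᵐ x ∂μ, x ∈ S → ∀ c : ℝ≥0, 0 < c → ∃ᶠ r in 𝓝[>] (0 : ℝ),
      F (closedBall x r) ≤ c * ENNReal.ofReal r ^ finrank ℝ V) :
    F S = 0 := by
  set G : Set V := {x | x ∈ S → ∀ c : ℝ≥0, 0 < c → ∃ᶠ r in 𝓝[>] (0 : ℝ),
    F (closedBall x r) ≤ c * ENNReal.ofReal r ^ finrank ℝ V}
  have hgood : F (S ∩ G) = 0 :=
    outerMeasure_eq_zero_of_frequently fun x (hx : x ∈ S ∩ G) => hx.2 hx.1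
  have hbad : F (S \ G) = 0 := by
    have hnull : μ (S \ G) = 0 := measure_mono_null (fun x hx => hx.2) h
    simpa [hnull] using
      outerMeasure_le_mul_addHaar_of_frequently μ fun x (hx : x ∈ S \ G) => hC x hx.1
  rw [← inter_union_sdiff S G]
  exact measure_union_null hgood hbad

end OuterMeasure

section DensityPoint

theorem ae_infDist_isLittleO_dist {X : Type*} [PseudoMetricSpace X] [SecondCountableTopology X]
    [MeasurableSpace X] [BorelSpace X] (μ : Measure X) [IsLocallyFiniteMeasure μ]
    [IsUnifLocDoublingMeasure μ] (E : Set X) :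
    ∀ᵐ x ∂μ, x ∈ E → (fun p => infDist p E) =o[𝓝 x] fun p => dist p x := by
  have hdensity := ae_imp_of_ae_restrict (ae_all_iff.2 fun m : ℕ =>
    IsUnifLocDoublingMeasure.ae_tendsto_measure_inter_div μ E m)
  filter_upwards [hdensity] with x hx hxE
  refine isLittleO_iff.2 fun η hη => ?_
  obtain ⟨m, hm⟩ := exists_nat_ge η⁻¹
  have hδ : Tendsto (fun p => η * dist p x) (𝓝[{p | 0 < dist p x}] x) (𝓝[>] 0) := by
    refine tendsto_nhdsWithin_iff.2
      ⟨tendsto_nhdsWithin_of_tendsto_nhds (Continuous.tendsto' (by fun_prop) _ _ (by simp)), ?_⟩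
    exact eventually_mem_nhdsWithin.mono fun p hp => mul_pos hη hp
  have hratio := hx hxE m id _ hδ (Eventually.of_forall fun p => by
    rw [mem_closedBall', ← mul_assoc]
    exact le_mul_of_one_le_left dist_nonneg ((inv_le_iff_one_le_mul₀ hη).1 hm))
  filter_upwards [eventually_nhdsWithin_iff.1 (hratio.eventually_ne one_ne_zero)] with p hp
  rw [Real.norm_of_nonneg infDist_nonneg, Real.norm_of_nonneg dist_nonneg]
  rcases dist_nonneg.eq_or_lt' (a := dist p x) with hpx | hpx
  · rw [hpx, mul_zero, ← hpx]
    exact infDist_le_dist_of_mem hxE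
  · obtain ⟨q, hqE, hq⟩ : (E ∩ closedBall p (η * dist p x)).Nonempty :=
      nonempty_of_measure_ne_zero (μ := μ) fun h0 => hp hpx (by simp [h0])
    exact (infDist_le_dist_of_mem hqE).trans (mem_closedBall'.1 hq)

theorem exists_retraction_hasFDerivAt_id {V : Type*} [NormedAddCommGroup V] [NormedSpace ℝ V]
    {E : Set V} {x : V} (hx : x ∈ E) (h : (fun p => infDist p E) =o[𝓝 x] fun p => dist p x) :
    ∃ e : V → V, (∀ p, e p ∈ E) ∧ (∀ p ∈ E, e p = p) ∧
      HasFDerivAt e (ContinuousLinearMap.id ℝ V) x := by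
  have hnear : ∀ p, ∃ q ∈ E, (p ∈ E → q = p) ∧ dist p q ≤ infDist p E + dist p x ^ 2 := by
    intro p
    by_cases hp : p ∈ E
    · exact ⟨p, hp, fun _ => rfl, by rw [dist_self]; exact add_nonneg infDist_nonneg (sq_nonneg _)⟩
    · have hpx : 0 < dist p x := dist_pos.2 fun h => hp (h ▸ hx)
      obtain ⟨q, hq, hpq⟩ := (infDist_lt_iff ⟨x, hx⟩).1
        (lt_add_of_pos_right (infDist p E) (pow_pos hpx 2))
      exact ⟨q, hq, fun h => absurd h hp, hpq.le⟩
  choose e heE hfix he using hnear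
  refine ⟨e, heE, hfix, HasFDerivAt.of_isLittleO ?_⟩
  have hsq : (fun p => dist p x ^ 2) =o[𝓝 x] fun p => dist p x :=
    (isLittleO_pow_id one_lt_two).comp_tendsto
      (Continuous.tendsto' (by fun_prop) x 0 (dist_self x))
  have hbound : (fun p => e p - p) =O[𝓝 x] fun p => infDist p E + dist p x ^ 2 :=
    IsBigO.of_bound' (Eventually.of_forall fun p => by
      rw [← dist_eq_norm, dist_comm]
      exact (he p).trans (le_abs_self _))
  simpa [hfix x hx, dist_eq_norm] using hbound.trans_isLittleO (h.add hsq)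

end DensityPoint

section Bisection

/-- `h` is an additive cocycle up to the twist by the bilinear form `B` of the increments of `z`.
The vertical component of `(f y)⁻¹ * f w` in a group of step two, for a map `f` with horizontal
part `z`, is of this kind. -/
def IsTwistedCocycle {X W : Type*} [NormedAddCommGroup W]
    [NormedSpace ℝ W] (B : W →L[ℝ] W →L[ℝ] ℝ) (z : X → W) (h : X → X → ℝ) :
    Prop :=
  ∀ y m w, h y w = h y m + h m w + B (z m - z y) (z w - z y)

/-- Near `(x, x)`, the function `h` is at most `K * dist y w ^ 2` up to an error which is
quadratically small in the distance of `(y, w)` to `(x, x)`. -/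
def HasQuadraticBoundAt {V : Type*} [NormedAddCommGroup V] (h : V → V → ℝ) (K : ℝ) (x : V) :
    Prop :=
  ∃ g : V × V → ℝ, g =o[𝓝 (x, x)] (fun p => ‖p - (x, x)‖ ^ 2) ∧
    ∀ᶠ p in 𝓝 (x, x), |h p.1 p.2| ≤ K * dist p.1 p.2 ^ 2 + g p

theorem isLittleO_of_forall_hasQuadraticBoundAt {V : Type*} [NormedAddCommGroup V]
    {h : V → V → ℝ} {x : V}
    (hh : ∀ ε > 0, ∃ K ≤ ε, HasQuadraticBoundAt h K x) :
    (fun p : V × V => h p.1 p.2) =o[𝓝 (x, x)] fun p => ‖p - (x, x)‖ ^ 2 := by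
  refine isLittleO_iff.2 fun ε hε => ?_
  obtain ⟨K, hKε, g, hg, hle⟩ := hh (ε / 8) (by positivity)
  filter_upwards [hle, hg.bound (half_pos hε)] with p hp hgp
  have hdist : dist p.1 p.2 ≤ 2 * ‖p - (x, x)‖ := by
    have h₁ : dist p.1 x ≤ ‖p - (x, x)‖ := by
      rw [dist_eq_norm]; exact norm_fst_le (p - (x, x))
    have h₂ : dist p.2 x ≤ ‖p - (x, x)‖ := by
      rw [dist_eq_norm]; exact norm_snd_le (p - (x, x))
    linarith [dist_triangle_right p.1 p.2 x]
  rw [norm_pow, norm_norm] at hgp ⊢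
  calc |h p.1 p.2| ≤ K * dist p.1 p.2 ^ 2 + g p := hp
    _ ≤ ε / 8 * (2 * ‖p - (x, x)‖) ^ 2 + ε / 2 * ‖p - (x, x)‖ ^ 2 := by
        gcongr
        exact (le_abs_self _).trans hgp
    _ = ε * ‖p - (x, x)‖ ^ 2 := by ring

theorem isLittleO_comp_norm_sub_sq {X Y F : Type*} [NormedAddCommGroup X] [NormedSpace ℝ X]
    [NormedAddCommGroup Y] [NormedSpace ℝ Y] [Norm F] {g : Y → F} {φ : X → Y} {φ' : X →L[ℝ] Y}
    {a : X} {b : Y} (hg : g =o[𝓝 b] fun p => ‖p - b‖ ^ 2) (hφ : HasFDerivAt φ φ' a)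
    (hab : φ a = b) : (fun p => g (φ p)) =o[𝓝 a] fun p => ‖p - a‖ ^ 2 := by
  subst hab
  exact (hg.comp_tendsto hφ.continuousAt).trans_isBigO (hφ.isBigO_sub.norm_norm.pow 2)

variable {V W : Type*} [NormedAddCommGroup V] [NormedSpace ℝ V]
  [NormedAddCommGroup W] [NormedSpace ℝ W]
  {B : W →L[ℝ] W →L[ℝ] ℝ} {z : V → W} {h : V → V → ℝ} {x : V} {A : V →L[ℝ] W}

theorem hasFDerivAt_midpoint (p : V × V) :
    HasFDerivAt (fun p : V × V => midpoint ℝ p.1 p.2)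
      ((2⁻¹ : ℝ) • (ContinuousLinearMap.fst ℝ V V + ContinuousLinearMap.snd ℝ V V)) p := by
  simp only [midpoint_eq_smul_add, invOf_eq_inv]
  exact (hasFDerivAt_fst.add hasFDerivAt_snd).const_smul _

theorem hasFDerivAt_sub_of_hasFDerivAt (hA : HasFDerivAt z A x) :
    HasFDerivAt (fun p : V × V => z p.2 - z p.1) (A ∘L .snd ℝ V V - A ∘L .fst ℝ V V) (x, x) := by
  have hfst : HasFDerivAt (fun p : V × V => z p.1) (A ∘L .fst ℝ V V) (x, x) :=
    HasFDerivAt.comp (x, x) hA hasFDerivAt_fst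
  have hsnd : HasFDerivAt (fun p : V × V => z p.2) (A ∘L .snd ℝ V V) (x, x) :=
    HasFDerivAt.comp (x, x) hA hasFDerivAt_snd
  exact hsnd.sub hfst

theorem isLittleO_midpoint_sub_sub (hA : HasFDerivAt z A x) :
    (fun p : V × V => z (midpoint ℝ p.1 p.2) - z p.1 - (2⁻¹ : ℝ) • (z p.2 - z p.1))
      =o[𝓝 (x, x)] fun p => p - (x, x) := by
  have hfst : HasFDerivAt (fun p : V × V => z p.1) (A ∘L .fst ℝ V V) (x, x) :=
    HasFDerivAt.comp (x, x) hA hasFDerivAt_fst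
  have hmid : HasFDerivAt (fun p : V × V => z (midpoint ℝ p.1 p.2))
      (A ∘L ((2⁻¹ : ℝ) • (.fst ℝ V V + .snd ℝ V V))) (x, x) :=
    HasFDerivAt.comp (x, x) (by simpa using hA) (hasFDerivAt_midpoint (x, x))
  have hzero : A ∘L ((2⁻¹ : ℝ) • (.fst ℝ V V + .snd ℝ V V)) - A ∘L .fst ℝ V V -
      (2⁻¹ : ℝ) • (A ∘L .snd ℝ V V - A ∘L .fst ℝ V V) = 0 := by
    refine ContinuousLinearMap.ext fun p => ?_
    change A ((2⁻¹ : ℝ) • (p.1 + p.2)) - A p.1 - (2⁻¹ : ℝ) • (A p.2 - A p.1) = 0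
    rw [map_smul, map_add]
    module
  have hderiv := (hmid.sub hfst).sub
    ((hasFDerivAt_sub_of_hasFDerivAt hA).const_smul (2⁻¹ : ℝ))
  rw [hzero] at hderiv
  simpa using hderiv.isLittleO

theorem isLittleO_bilinear_midpoint (hB : ∀ u, B u u = 0) (hA : HasFDerivAt z A x) :
    (fun p : V × V => B (z (midpoint ℝ p.1 p.2) - z p.1) (z p.2 - z p.1))
      =o[𝓝 (x, x)] fun p => ‖p - (x, x)‖ ^ 2 := by
  have hincr : (fun p : V × V => z p.2 - z p.1) =O[𝓝 (x, x)] fun p => p - (x, x) := by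
    simpa using (hasFDerivAt_sub_of_hasFDerivAt hA).isBigO_sub
  have hbound : (fun p : V × V => B (z (midpoint ℝ p.1 p.2) - z p.1) (z p.2 - z p.1))
      =O[𝓝 (x, x)] fun p => ‖z (midpoint ℝ p.1 p.2) - z p.1 - (2⁻¹ : ℝ) • (z p.2 - z p.1)‖ *
        ‖z p.2 - z p.1‖ := by
    refine IsBigO.of_bound ‖B‖ (Eventually.of_forall fun p => ?_)
    have halt : B (z (midpoint ℝ p.1 p.2) - z p.1) (z p.2 - z p.1) =
        B (z (midpoint ℝ p.1 p.2) - z p.1 - (2⁻¹ : ℝ) • (z p.2 - z p.1)) (z p.2 - z p.1) := by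
      rw [map_sub B (_ - _) (_ • _), sub_apply, map_smul B,
        smul_apply, hB, smul_zero, sub_zero]
    rw [halt, norm_mul, norm_norm, norm_norm, ← mul_assoc]
    exact B.le_opNorm₂ _ _
  simpa only [sq] using hbound.trans_isLittleO
    ((isLittleO_midpoint_sub_sub hA).norm_norm.mul_isBigO hincr.norm_norm)

/-- Cut at the midpoint: as `B` is alternating, the twist there only sees the second-order defect
of `z`, and each half contributes `K * (dist y w / 2) ^ 2`. -/
theorem HasQuadraticBoundAt.half (hB : ∀ u, B u u = 0) (hcoc : IsTwistedCocycle B z h)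
    (hA : HasFDerivAt z A x) {K : ℝ} (hK : HasQuadraticBoundAt h K x) :
    HasQuadraticBoundAt h (K / 2) x := by
  obtain ⟨g, hg, hle⟩ := hK
  have hleft := hasFDerivAt_fst.prodMk (hasFDerivAt_midpoint (x, x))
  have hright := (hasFDerivAt_midpoint (x, x)).prodMk hasFDerivAt_snd
  have hleft0 : (x, midpoint ℝ x x) = (x, x) := by rw [midpoint_self]
  have hright0 : (midpoint ℝ x x, x) = (x, x) := by rw [midpoint_self]
  refine ⟨_, ((isLittleO_comp_norm_sub_sq hg hleft hleft0).add
    (isLittleO_comp_norm_sub_sq hg hright hright0)).add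
    (isLittleO_bilinear_midpoint hB hA).norm_left, ?_⟩
  have hlim := hleft.continuousAt.tendsto
  have hrim := hright.continuousAt.tendsto
  rw [hleft0] at hlim
  rw [hright0] at hrim
  filter_upwards [hlim.eventually hle, hrim.eventually hle] with p hp₁ hp₂
  have hd₁ : dist p.1 (midpoint ℝ p.1 p.2) = dist p.1 p.2 / 2 := by
    rw [dist_left_midpoint, Real.norm_ofNat, inv_mul_eq_div]
  have hd₂ : dist (midpoint ℝ p.1 p.2) p.2 = dist p.1 p.2 / 2 := by
    rw [dist_midpoint_right, Real.norm_ofNat, inv_mul_eq_div]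
  simp only [hd₁] at hp₁
  simp only [hd₂] at hp₂
  rw [hcoc p.1 (midpoint ℝ p.1 p.2) p.2, Real.norm_eq_abs]
  refine (abs_add_three _ _ _).trans ?_
  linarith

theorem HasQuadraticBoundAt.div_two_pow (hB : ∀ u, B u u = 0) (hcoc : IsTwistedCocycle B z h)
    (hA : HasFDerivAt z A x) {K : ℝ} (hK : HasQuadraticBoundAt h K x) (j : ℕ) :
    HasQuadraticBoundAt h (K / 2 ^ j) x := by
  induction j with
  | zero => simpa using hK
  | succ j ih =>
    rw [pow_succ, ← div_div]
    exact ih.half hB hcoc hA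

theorem IsTwistedCocycle.isLittleO_of_hasQuadraticBoundAt (hcoc : IsTwistedCocycle B z h)
    (hB : ∀ u, B u u = 0) (hA : HasFDerivAt z A x) {K : ℝ} (hK : HasQuadraticBoundAt h K x) :
    (fun p : V × V => h p.1 p.2) =o[𝓝 (x, x)] fun p => ‖p - (x, x)‖ ^ 2 := by
  refine isLittleO_of_forall_hasQuadraticBoundAt fun ε hε => ?_
  have hlim : Tendsto (fun j : ℕ => K / 2 ^ j) atTop (𝓝 0) :=
    tendsto_const_nhds.div_atTop (tendsto_pow_atTop_atTop_of_one_lt one_lt_two)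
  obtain ⟨j, hj⟩ := (hlim.eventually_le_const hε).exists
  exact ⟨_, hj, hK.div_two_pow hB hcoc hA j⟩

theorem IsTwistedCocycle.isotropic_of_isLittleO (hcoc : IsTwistedCocycle B z h)
    (hA : HasFDerivAt z A x)
    (hh : (fun p : V × V => h p.1 p.2) =o[𝓝 (x, x)] fun p => ‖p - (x, x)‖ ^ 2) (u v : V) :
    B (A u) (A v) = 0 := by
  have hsmall : ∀ a b : V, (fun r : ℝ => h (x + r • a) (x + r • b)) =o[𝓝 0] fun r => r ^ 2 := by
    intro a b
    have hline : ∀ c : V, HasDerivAt (fun r : ℝ => x + r • c) c 0 := fun c => by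
      simpa using ((hasDerivAt_id (0 : ℝ)).smul_const c).const_add x
    simpa using isLittleO_comp_norm_sub_sq hh ((hline a).prodMk (hline b)).hasFDerivAt (by simp)
  have hform : (fun r : ℝ => B (z (x + r • u) - z x) (z (x + r • v) - z x))
      =o[𝓝 0] fun r => r ^ 2 := by
    have hsum := ((hsmall 0 v).sub (hsmall 0 u)).sub (hsmall u v)
    refine hsum.congr_left fun r => ?_
    rw [smul_zero, add_zero, hcoc x (x + r • u) (x + r • v)]
    ring
  have hlim : Tendsto (fun r : ℝ => B (r⁻¹ • (z (x + r • u) - z x)) (r⁻¹ • (z (x + r • v) - z x)))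
      (𝓝[≠] 0) (𝓝 (B (A u) (A v))) :=
    (B.isBoundedBilinearMap.continuous.tendsto (A u, A v)).comp
      ((hA.hasLineDerivAt u).tendsto_slope_zero.prodMk_nhds
        (hA.hasLineDerivAt v).tendsto_slope_zero)
  refine tendsto_nhds_unique hlim ?_
  refine (hform.mono nhdsWithin_le_nhds).tendsto_div_nhds_zero.congr fun r => ?_
  simp only [map_smul, smul_apply, smul_eq_mul, sq]
  rw [← mul_assoc, ← mul_inv, div_eq_inv_mul]

theorem hasQuadraticBoundAt_of_abs_le_mul_dist_sq {e : V → V}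
    (he : HasFDerivAt e (ContinuousLinearMap.id ℝ V) x) {K : ℝ} (hK : 0 ≤ K)
    (hh : ∀ y w, |h y w| ≤ K * dist (e y) (e w) ^ 2) : HasQuadraticBoundAt h (2 * K) x := by
  have hδ : (fun p : V × V => e p.2 - e p.1 - (p.2 - p.1)) =o[𝓝 (x, x)] fun p => p - (x, x) := by
    simpa using (hasFDerivAt_sub_of_hasFDerivAt he).isLittleO
  refine ⟨fun p => 2 * K * ‖e p.2 - e p.1 - (p.2 - p.1)‖ ^ 2,
    (hδ.norm_norm.pow two_pos).const_mul_left _, Eventually.of_forall fun p => ?_⟩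
  have hdist : dist (e p.1) (e p.2) ≤ dist p.1 p.2 + ‖e p.2 - e p.1 - (p.2 - p.1)‖ := by
    rw [dist_comm (e p.1), dist_comm p.1, dist_eq_norm, dist_eq_norm]
    refine (norm_add_le _ _).trans' (le_of_eq (congrArg _ ?_))
    abel
  calc |h p.1 p.2| ≤ K * dist (e p.1) (e p.2) ^ 2 := hh p.1 p.2
    _ ≤ K * (2 * (dist p.1 p.2 ^ 2 + ‖e p.2 - e p.1 - (p.2 - p.1)‖ ^ 2)) := by
        gcongr
        exact (pow_le_pow_left₀ dist_nonneg hdist 2).trans add_sq_le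
    _ = 2 * K * dist p.1 p.2 ^ 2 + 2 * K * ‖e p.2 - e p.1 - (p.2 - p.1)‖ ^ 2 := by ring

end Bisection

section FiniteDimension

theorem two_mul_finrank_le_of_isotropic {K V : Type*} [Field K] [AddCommGroup V] [Module K V]
    [FiniteDimensional K V] {B : LinearMap.BilinForm K V} (hB : B.Nondegenerate)
    {S : Submodule K V} (hS : ∀ u ∈ S, ∀ v ∈ S, B u v = 0) :
    2 * finrank K S ≤ finrank K V := by
  have hle : S ≤ B.orthogonal S := fun u hu v hv => hS v hv u hu
  have hdim := LinearMap.BilinForm.finrank_orthogonal hB S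
  have := Submodule.finrank_mono hle
  have := S.finrank_le
  omega

theorem exists_finset_card_le_cover_closedBall_pi {ι : Type*} [Fintype ι] {N : ℕ} (hN : N ≠ 0)
    {R : ℝ} (hR : 0 < R) : ∃ T : Finset (ι → ℝ), T.card ≤ (2 * N + 1) ^ Fintype.card ι ∧
      closedBall 0 R ⊆ ⋃ c ∈ T, closedBall c (R / N) := by
  classical
  set s : ℝ := R / N
  have hs : 0 < s := by positivity
  let box : Finset (ι → ℤ) := Finset.Icc (fun _ => -N) (fun _ => N)
  refine ⟨box.image fun i j => s * i j, Finset.card_image_le.trans ?_, fun v hv => ?_⟩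
  · rw [Pi.card_Icc, Finset.prod_const, Int.card_Icc, Finset.card_univ]
    gcongr
    omega
  · have hcoord : ∀ j, |v j / s| ≤ N := fun j => by
      rw [abs_div, abs_of_pos hs, div_le_iff₀ hs, mul_div_cancel₀ R (by positivity)]
      exact (norm_le_pi_norm v j).trans (mem_closedBall_zero_iff.1 hv)
    refine mem_iUnion₂.2 ⟨_, Finset.mem_image_of_mem _ (a := fun j => ⌊v j / s⌋) ?_, ?_⟩
    · refine Finset.mem_Icc.2 ⟨fun j => ?_, fun j => ?_⟩
      · exact Int.le_floor.2 (by exact_mod_cast (abs_le.1 (hcoord j)).1)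
      · exact_mod_cast (Int.floor_le _).trans (abs_le.1 (hcoord j)).2
    · refine (dist_pi_le_iff hs.le).2 fun j => ?_
      have hfract : v j - s * ⌊v j / s⌋ = s * Int.fract (v j / s) := by
        rw [Int.fract, mul_sub, mul_div_cancel₀ _ hs.ne']
      rw [Real.dist_eq, hfract, abs_of_nonneg (mul_nonneg hs.le (Int.fract_nonneg _))]
      exact mul_le_of_le_one_right hs.le (Int.fract_lt_one _).le

theorem exists_finset_card_le_cover_image_closedBall {V W : Type*} [NormedAddCommGroup V]
    [NormedSpace ℝ V] [NormedAddCommGroup W] [NormedSpace ℝ W] (A : V →L[ℝ] W)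
    [FiniteDimensional ℝ A.range] :
    ∃ C : ℝ, 0 ≤ C ∧ ∀ N : ℕ, N ≠ 0 → ∀ r : ℝ, 0 < r → ∃ T : Finset W,
      T.card ≤ (2 * N + 1) ^ finrank ℝ A.range ∧
        A '' closedBall 0 r ⊆ ⋃ c ∈ T, closedBall c (C * r / N) := by
  classical
  let e : A.range ≃L[ℝ] (Fin (finrank ℝ A.range) → ℝ) := (finBasis ℝ A.range).equivFunL
  let φ : V →L[ℝ] Fin (finrank ℝ A.range) → ℝ := e ∘L A.rangeRestrict
  let ψ : (Fin (finrank ℝ A.range) → ℝ) →L[ℝ] W := A.range.subtypeL ∘L e.symm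
  have hψφ : ∀ v, ψ (φ v) = A v := fun v => congrArg Subtype.val (e.symm_apply_apply ⟨A v, v, rfl⟩)
  refine ⟨‖ψ‖ * (‖φ‖ + 1), by positivity, fun N hN r hr => ?_⟩
  obtain ⟨T, hcard, hT⟩ := exists_finset_card_le_cover_closedBall_pi
    (ι := Fin (finrank ℝ A.range)) hN (R := (‖φ‖ + 1) * r) (by positivity)
  rw [Fintype.card_fin] at hcard
  refine ⟨T.image ψ, Finset.card_image_le.trans hcard, ?_⟩
  rintro _ ⟨v, hv, rfl⟩
  have hφv : ‖φ v‖ ≤ (‖φ‖ + 1) * r :=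
    φ.le_of_opNorm_le_of_le (le_add_of_nonneg_right zero_le_one) (mem_closedBall_zero_iff.1 hv)
  obtain ⟨c, hcT, hc⟩ := mem_iUnion₂.1 (hT (mem_closedBall_zero_iff.2 hφv))
  refine mem_iUnion₂.2 ⟨ψ c, Finset.mem_image_of_mem ψ hcT, ?_⟩
  rw [mem_closedBall_iff_norm, ← hψφ, ← map_sub, mul_assoc, mul_div_assoc]
  exact ψ.le_opNorm_of_le (mem_closedBall_iff_norm.1 hc)

theorem exists_nat_pow_mul_div_pow_le {m k : ℕ} (hmk : m < k) {C c : ℝ} (hC : 0 ≤ C) (hc : 0 < c) :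
    ∃ N : ℕ, N ≠ 0 ∧ (2 * N + 1) ^ m * (C / N) ^ k ≤ c := by
  obtain ⟨N, hN⟩ := exists_nat_gt (3 ^ m * C ^ k / c)
  have hN₀ : (0 : ℝ) < N := lt_of_le_of_lt (by positivity) hN
  have hN₁ : (1 : ℝ) ≤ N := Nat.one_le_cast.2 (Nat.cast_pos.1 hN₀)
  refine ⟨N, (Nat.cast_pos.1 hN₀).ne', ?_⟩
  calc (2 * (N : ℝ) + 1) ^ m * (C / N) ^ k
      ≤ (3 * N) ^ m * (C ^ k / N ^ (m + 1)) := by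
        rw [div_pow]
        gcongr
        · linarith
        · exact hmk
    _ = 3 ^ m * C ^ k / N := by
        rw [mul_pow, pow_succ]
        field_simp
    _ ≤ c := by
        rw [div_lt_comm₀ hc hN₀] at hN
        exact hN.le

end FiniteDimension

section HeisenbergGroup

variable {n : ℕ}

theorem bijective_sumElim_xIdx2_yIdx2 (n : ℕ) :
    Function.Bijective (Sum.elim (xIdx2 n) (yIdx2 n)) := by
  refine ⟨?_, fun i => ?_⟩
  · rintro (j | j) (l | l) h <;>
      simp only [Sum.elim_inl, Sum.elim_inr, xIdx2, yIdx2, Fin.mk.injEq] at h <;> grind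
  · obtain ⟨m, hm | hm⟩ := Nat.even_or_odd' i.1
    · exact ⟨Sum.inl ⟨m, by omega⟩, Fin.ext hm.symm⟩
    · exact ⟨Sum.inr ⟨m, by omega⟩, Fin.ext hm.symm⟩

theorem sum_eq_sum_xIdx2_add_yIdx2 {M : Type*} [AddCommMonoid M] (g : Fin (2 * n) → M) :
    ∑ i, g i = ∑ j, (g (xIdx2 n j) + g (yIdx2 n j)) := by
  rw [← (bijective_sumElim_xIdx2_yIdx2 n).sum_comp g, Fintype.sum_sum_type,
    ← Finset.sum_add_distrib]
  rfl

/-- The standard symplectic form `omegaF` as a continuous bilinear map. -/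
noncomputable def symplecticForm (n : ℕ) : Horiz n →L[ℝ] Horiz n →L[ℝ] ℝ :=
  ∑ j : Fin n, ((EuclideanSpace.proj (xIdx2 n j)).smulRight (EuclideanSpace.proj (yIdx2 n j)) -
    (EuclideanSpace.proj (yIdx2 n j)).smulRight (EuclideanSpace.proj (xIdx2 n j)))

theorem symplecticForm_apply (u v : Horiz n) : symplecticForm n u v = omegaF n u v := by
  simp [symplecticForm, omegaF]

theorem omegaF_self (u : Horiz n) : omegaF n u u = 0 := by
  simp [omegaF, mul_comm]

theorem omegaF_swap (u v : Horiz n) : omegaF n v u = -omegaF n u v := by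
  rw [omegaF, omegaF, ← Finset.sum_neg_distrib]
  exact Finset.sum_congr rfl fun j _ => by ring

theorem symplecticForm_nondegenerate (n : ℕ) : (symplecticForm n).toBilinForm.Nondegenerate := by
  have halt : (symplecticForm n).toBilinForm.IsAlt := fun u =>
    (symplecticForm_apply u u).trans (omegaF_self u)
  refine halt.isRefl.nondegenerate_iff_separatingLeft.2 fun u hu => ?_
  have hω : ∀ v, omegaF n u v = 0 := fun v => (symplecticForm_apply u v).symm.trans (hu v)
  have hinj := (bijective_sumElim_xIdx2_yIdx2 n).1
  have hxx : ∀ i j, xIdx2 n i = xIdx2 n j ↔ i = j := fun i j => (hinj.comp Sum.inl_injective).eq_iff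
  have hyy : ∀ i j, yIdx2 n i = yIdx2 n j ↔ i = j := fun i j => (hinj.comp Sum.inr_injective).eq_iff
  have hxy : ∀ i j, xIdx2 n i ≠ yIdx2 n j := fun i j h => Sum.inl_ne_inr (hinj h)
  ext i
  obtain ⟨j | j, rfl⟩ := (bijective_sumElim_xIdx2_yIdx2 n).2 i
  · simpa [omegaF, hyy, hxy] using hω (EuclideanSpace.single (yIdx2 n j) 1)
  · simpa [omegaF, hxx, fun i j => (hxy j i).symm] using hω (EuclideanSpace.single (xIdx2 n j) 1)

theorem finrank_range_le_of_isotropic {V : Type*} [NormedAddCommGroup V] [NormedSpace ℝ V]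
    {A : V →L[ℝ] Horiz n}
    (hA : ∀ u v, symplecticForm n (A u) (A v) = 0) : finrank ℝ A.range ≤ n := by
  have hrange : ∀ u ∈ A.range, ∀ v ∈ A.range, (symplecticForm n).toBilinForm u v = 0 := by
    rintro _ ⟨u, rfl⟩ _ ⟨v, rfl⟩
    exact hA u v
  have hle := two_mul_finrank_le_of_isotropic (symplecticForm_nondegenerate n) hrange
  rw [finrank_euclideanSpace_fin] at hle
  exact Nat.le_of_mul_le_mul_left hle two_pos

/-- The vertical coordinate of `q⁻¹ * p` in the Heisenberg group. -/
noncomputable def vertical (n : ℕ) (q p : Heis n) : ℝ :=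
  p (tIdx n) - q (tIdx n) + 2 * omegaF n (piH n q) (piH n p)

theorem isTwistedCocycle_vertical {X : Type*} (f : X → Heis n) :
    IsTwistedCocycle (-(2 : ℝ) • symplecticForm n) (fun y => piH n (f y))
      fun y w => vertical n (f y) (f w) := by
  intro y m w
  simp only [vertical, smul_apply, map_sub, sub_apply, symplecticForm_apply, omegaF_self,
    smul_eq_mul, omegaF_swap (piH n (f y)) (piH n (f m))]
  ring

theorem norm_piH_sub_sq (p q : Heis n) : ‖piH n p - piH n q‖ ^ 2 =
    ∑ j, ((p (xIdx n j) - q (xIdx n j)) ^ 2 + (p (yIdx n j) - q (yIdx n j)) ^ 2) := by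
  rw [EuclideanSpace.real_norm_sq_eq, sum_eq_sum_xIdx2_add_yIdx2]
  rfl

theorem dK_pow_four (p q : Heis n) :
    dK n p q ^ 4 = ‖piH n p - piH n q‖ ^ 4 + vertical n q p ^ 2 := by
  have hvert : vertical n q p = p (tIdx n) - q (tIdx n) +
      2 * ∑ j, (q (xIdx n j) * p (yIdx n j) - p (xIdx n j) * q (yIdx n j)) := by
    simp only [mul_comm (p _)]
    rfl
  rw [dK, ← hvert, ← norm_piH_sub_sq, ← Real.rpow_natCast, ← Real.rpow_mul (by positivity)]
  norm_num
  ring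

theorem dK_nonneg (p q : Heis n) : 0 ≤ dK n p q :=
  Real.rpow_nonneg (by positivity) _

theorem norm_piH_sub_le_dK (p q : Heis n) : ‖piH n p - piH n q‖ ≤ dK n p q := by
  refine le_of_pow_le_pow_left₀ four_ne_zero (dK_nonneg p q) ?_
  rw [dK_pow_four]
  exact le_add_of_nonneg_right (sq_nonneg _)

theorem abs_vertical_le_dK_sq (p q : Heis n) : |vertical n q p| ≤ dK n p q ^ 2 := by
  refine abs_le_of_sq_le_sq ?_ (sq_nonneg _)
  rw [← pow_mul, dK_pow_four]
  exact le_add_of_nonneg_left (by positivity)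

theorem dK_le {p q : Heis n} {a b : ℝ} (ha : ‖piH n p - piH n q‖ ≤ a) (hb : 0 ≤ b)
    (h : |vertical n q p| ≤ b ^ 2) : dK n p q ≤ a + b := by
  have ha₀ : 0 ≤ a := (norm_nonneg _).trans ha
  refine le_of_pow_le_pow_left₀ four_ne_zero (by positivity) ?_
  calc dK n p q ^ 4 = ‖piH n p - piH n q‖ ^ 4 + |vertical n q p| ^ 2 := by
        rw [dK_pow_four, sq_abs]
    _ ≤ a ^ 4 + (b ^ 2) ^ 2 := by gcongr
    _ ≤ (a + b) ^ 4 := by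
        rw [← pow_mul]
        exact pow_add_pow_le ha₀ hb four_ne_zero

end HeisenbergGroup

section HausdorffContent

theorem eventually_forall_closedBall_norm_le {X F : Type*} [SeminormedAddCommGroup X]
    [Norm F] {u : X → F} {a : X} {j : ℕ} (hu : u =o[𝓝 a] fun p => ‖p - a‖ ^ j)
    {ε : ℝ} (hε : 0 < ε) : ∀ᶠ r in 𝓝[>] (0 : ℝ), ∀ p ∈ closedBall a r, ‖u p‖ ≤ ε * r ^ j := by
  obtain ⟨δ, hδ, hu⟩ := Metric.eventually_nhds_iff_ball.1 (hu.bound hε)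
  filter_upwards [Ioo_mem_nhdsGT hδ] with r hr p hp
  calc ‖u p‖ ≤ ε * ‖‖p - a‖ ^ j‖ := hu p (closedBall_subset_ball hr.2 hp)
    _ ≤ ε * r ^ j := by
        rw [norm_pow, norm_norm]
        gcongr
        exact mem_closedBall_iff_norm.1 hp

/-- The `k`-dimensional Hausdorff content of the Korányi distance, that is, the outer measure
obtained by covering with sets `U` of weight `kDiam n U ^ k`. The weight of the empty set is set
to zero, which matters only for `k = 0`. -/
noncomputable def hausdorffContent (n k : ℕ) : OuterMeasure (Heis n) :=
  OuterMeasure.ofFunction (fun U => ⨆ _ : U.Nonempty, kDiam n U ^ k) (by simp)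

variable {n k : ℕ}

theorem isHausdorffNullK_of_hausdorffContent_eq_zero (hk : k ≠ 0) {S : Set (Heis n)}
    (h : hausdorffContent n k S = 0) : IsHausdorffNullK n k S := by
  intro ε hε
  have hweight : ∀ U : Set (Heis n), ⨆ _ : U.Nonempty, kDiam n U ^ k = kDiam n U ^ k := by
    intro U
    rcases U.eq_empty_or_nonempty with rfl | hU
    · simp [kDiam, hk]
    · exact ciSup_pos hU
  rw [← h, hausdorffContent, OuterMeasure.ofFunction_apply] at hε
  simpa only [hweight, iInf_lt_iff, exists_prop] using hε

theorem hausdorffContent_le {U : Set (Heis n)} {D : ℝ} (h : ∀ p ∈ U, ∀ q ∈ U, dK n p q ≤ D) :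
    hausdorffContent n k U ≤ ENNReal.ofReal D ^ k :=
  (OuterMeasure.ofFunction_le U).trans <| iSup_le fun _ => pow_le_pow_left'
    (iSup₂_le fun p hp => iSup₂_le fun q hq => ENNReal.ofReal_le_ofReal (h p hp q hq)) k

theorem hausdorffContent_image_le_card_mul {X ι : Type*} {g : X → Heis n} {S : Set X}
    {T : Finset ι} {P : ι → Set X} (hS : S ⊆ ⋃ i ∈ T, P i) {D : ℝ}
    (h : ∀ i ∈ T, ∀ y ∈ S ∩ P i, ∀ w ∈ S ∩ P i, dK n (g y) (g w) ≤ D) :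
    hausdorffContent n k (g '' S) ≤ T.card * ENNReal.ofReal D ^ k := by
  calc hausdorffContent n k (g '' S) ≤ hausdorffContent n k (⋃ i ∈ T, g '' (S ∩ P i)) := by
        rw [← image_iUnion₂, ← inter_iUnion₂, inter_eq_left.2 hS]
    _ ≤ ∑ i ∈ T, hausdorffContent n k (g '' (S ∩ P i)) := measure_biUnion_finset_le T _
    _ ≤ ∑ _i ∈ T, ENNReal.ofReal D ^ k := by
        refine Finset.sum_le_sum fun i hi => hausdorffContent_le ?_
        rintro _ ⟨y, hy, rfl⟩ _ ⟨w, hw, rfl⟩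
        exact h i hi y hy w hw
    _ = T.card * ENNReal.ofReal D ^ k := by rw [Finset.sum_const, nsmul_eq_mul]

theorem hausdorffContent_image_inter_closedBall_le {X : Type*} [PseudoMetricSpace X]
    {f : X → Heis n} {E : Set X} {x : X} {L : ℝ≥0}
    (hf : ∀ y ∈ E, ∀ w ∈ E, dK n (f y) (f w) ≤ L * dist y w) {r : ℝ} :
    hausdorffContent n k (f '' (closedBall x r ∩ E)) ≤
      ((2 * L) ^ k : ℝ≥0) * ENNReal.ofReal r ^ k := by
  have hdiam : ∀ p ∈ f '' (closedBall x r ∩ E), ∀ q ∈ f '' (closedBall x r ∩ E),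
      dK n p q ≤ (2 * L : ℝ≥0) * r := by
    rintro _ ⟨y, ⟨hy, hyE⟩, rfl⟩ _ ⟨w, ⟨hw, hwE⟩, rfl⟩
    calc dK n (f y) (f w) ≤ L * dist y w := hf y hyE w hwE
      _ ≤ L * (r + r) := by
          gcongr
          exact (dist_triangle_right y w x).trans (add_le_add hy hw)
      _ = (2 * L : ℝ≥0) * r := by push_cast; ring
  refine (hausdorffContent_le hdiam).trans_eq ?_
  rw [ENNReal.ofReal_mul NNReal.zero_le_coe, mul_pow, ENNReal.ofReal_coe_nnreal, ENNReal.coe_pow]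

variable {V : Type*} [NormedAddCommGroup V] [NormedSpace ℝ V] {g : V → Heis n} {x : V}
  {A : V →L[ℝ] Horiz n}

theorem eventually_dK_le_two_mul_add_three_mul (hA : HasFDerivAt (fun y => piH n (g y)) A x)
    (hvert : (fun p : V × V => vertical n (g p.1) (g p.2)) =o[𝓝 (x, x)] fun p => ‖p - (x, x)‖ ^ 2)
    {ε : ℝ} (hε : 0 < ε) :
    ∀ᶠ r in 𝓝[>] (0 : ℝ), ∀ (ρ : ℝ) (c : Horiz n),
      ∀ y ∈ closedBall x r ∩ (fun y => A (y - x)) ⁻¹' closedBall c ρ,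
      ∀ w ∈ closedBall x r ∩ (fun y => A (y - x)) ⁻¹' closedBall c ρ,
        dK n (g y) (g w) ≤ 2 * ρ + 3 * ε * r := by
  have hlin : (fun y => piH n (g y) - piH n (g x) - A (y - x)) =o[𝓝 x] fun y => ‖y - x‖ ^ 1 := by
    simpa using hA.isLittleO.norm_right
  filter_upwards [self_mem_nhdsWithin, eventually_forall_closedBall_norm_le hlin hε,
    eventually_forall_closedBall_norm_le hvert (pow_pos hε 2)]
    with r (hr : 0 < r) hhor hver ρ c y ⟨hy, hyc⟩ w ⟨hw, hwc⟩
  have hhoriz : ‖piH n (g y) - piH n (g w)‖ ≤ 2 * ρ + 2 * ε * r := by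
    have hAyw : ‖A (y - x) - A (w - x)‖ ≤ ρ + ρ := by
      rw [← dist_eq_norm]
      exact (dist_triangle_right _ _ c).trans (add_le_add hyc hwc)
    have hsplit : piH n (g y) - piH n (g w) = (A (y - x) - A (w - x)) +
        (piH n (g y) - piH n (g x) - A (y - x)) - (piH n (g w) - piH n (g x) - A (w - x)) := by
      abel
    rw [hsplit]
    refine (norm_sub_le _ _).trans ?_
    linarith [norm_add_le (A (y - x) - A (w - x)) (piH n (g y) - piH n (g x) - A (y - x)),
      hhor y hy, hhor w hw]
  have hvertical : |vertical n (g w) (g y)| ≤ (ε * r) ^ 2 := by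
    rw [mul_pow]
    exact hver (w, y) (by rw [← closedBall_prod_same]; exact ⟨hw, hy⟩)
  refine (dK_le hhoriz (by positivity) hvertical).trans_eq ?_
  ring

theorem eventually_hausdorffContent_image_closedBall_le [FiniteDimensional ℝ V]
    (hA : HasFDerivAt (fun y => piH n (g y)) A x)
    (hvert : (fun p : V × V => vertical n (g p.1) (g p.2)) =o[𝓝 (x, x)] fun p => ‖p - (x, x)‖ ^ 2)
    (hrank : finrank ℝ A.range < k) {c : ℝ≥0} (hc : 0 < c) :
    ∀ᶠ r in 𝓝[>] (0 : ℝ),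
      hausdorffContent n k (g '' closedBall x r) ≤ c * ENNReal.ofReal r ^ k := by
  obtain ⟨C, hC, hcover⟩ := exists_finset_card_le_cover_image_closedBall A
  obtain ⟨N, hN, hNc⟩ := exists_nat_pow_mul_div_pow_le hrank (C := 2 * C + 3) (by positivity)
    (NNReal.coe_pos.2 hc)
  filter_upwards [self_mem_nhdsWithin,
    eventually_dK_le_two_mul_add_three_mul hA hvert (ε := (N : ℝ)⁻¹) (by positivity)]
    with r (hr : 0 < r) hdiam
  obtain ⟨T, hcard, hT⟩ := hcover N hN r hr
  have hball : closedBall x r ⊆ ⋃ c ∈ T, (fun y => A (y - x)) ⁻¹' closedBall c (C * r / N) := by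
    intro y hy
    rw [← preimage_iUnion₂]
    exact hT (mem_image_of_mem A (mem_closedBall_zero_iff.2 (mem_closedBall_iff_norm.1 hy)))
  have hcast : (((2 * N + 1) ^ finrank ℝ A.range : ℕ) : ℝ≥0∞) =
      ENNReal.ofReal ((2 * N + 1) ^ finrank ℝ A.range) := by
    rw [← ENNReal.ofReal_natCast]
    push_cast
    rfl
  have hD : 2 * (C * r / N) + 3 * (N : ℝ)⁻¹ * r = (2 * C + 3) / N * r := by ring
  calc hausdorffContent n k (g '' closedBall x r)
      ≤ T.card * ENNReal.ofReal ((2 * C + 3) / N * r) ^ k :=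
        hD ▸ hausdorffContent_image_le_card_mul hball fun c _ => hdiam _ c
    _ ≤ ((2 * N + 1) ^ finrank ℝ A.range : ℕ) * ENNReal.ofReal ((2 * C + 3) / N * r) ^ k := by
        gcongr
    _ = ENNReal.ofReal ((2 * N + 1) ^ finrank ℝ A.range * ((2 * C + 3) / N) ^ k) *
        ENNReal.ofReal r ^ k := by
        rw [ENNReal.ofReal_mul (p := (2 * C + 3) / N) (by positivity),
          ENNReal.ofReal_mul (p := (2 * N + 1) ^ _) (by positivity),
          ENNReal.ofReal_pow (p := (2 * C + 3) / N) (by positivity), mul_pow, mul_assoc, hcast]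
    _ ≤ c * ENNReal.ofReal r ^ k := by
        gcongr
        exact (ENNReal.ofReal_le_ofReal hNc).trans_eq (ENNReal.ofReal_coe_nnreal)

end HausdorffContent

section PureUnrectifiability

variable {n : ℕ} {V : Type*} [NormedAddCommGroup V] [NormedSpace ℝ V] [FiniteDimensional ℝ V]
  {E : Set V} {f : V → Heis n} {x : V} {L : ℝ≥0}

theorem eventually_hausdorffContent_image_inter_le {k : ℕ} (hk : n < k)
    (hf : ∀ y ∈ E, ∀ w ∈ E, dK n (f y) (f w) ≤ L * dist y w) (hx : x ∈ E)
    (hdensity : (fun p => infDist p E) =o[𝓝 x] fun p => dist p x)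
    (hdiff : DifferentiableWithinAt ℝ (fun y => piH n (f y)) E x) {c : ℝ≥0} (hc : 0 < c) :
    ∀ᶠ r in 𝓝[>] (0 : ℝ),
      hausdorffContent n k (f '' (closedBall x r ∩ E)) ≤ c * ENNReal.ofReal r ^ k := by
  obtain ⟨e, heE, hefix, he⟩ := exists_retraction_hasFDerivAt_id hx hdensity
  obtain ⟨A, hA⟩ := hdiff
  replace hA := hA.comp_hasFDerivAt_of_eq x he (Eventually.of_forall heE) (hefix x hx).symm
  rw [ContinuousLinearMap.comp_id] at hA
  have hcoc := isTwistedCocycle_vertical fun y => f (e y)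
  have hquad : HasQuadraticBoundAt (fun y w => vertical n (f (e y)) (f (e w))) (2 * L ^ 2) x := by
    refine hasQuadraticBoundAt_of_abs_le_mul_dist_sq he (by positivity) fun y w => ?_
    rw [← mul_pow, dist_comm]
    exact (abs_vertical_le_dK_sq _ _).trans
      (pow_le_pow_left₀ (dK_nonneg _ _) (hf _ (heE w) _ (heE y)) 2)
  have hvert := hcoc.isLittleO_of_hasQuadraticBoundAt
    (fun u => by simp [symplecticForm_apply, omegaF_self]) hA hquad
  have hrank : finrank ℝ A.range < k := by
    refine (finrank_range_le_of_isotropic fun u v => ?_).trans_lt hk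
    simpa using hcoc.isotropic_of_isLittleO hA hvert u v
  filter_upwards [eventually_hausdorffContent_image_closedBall_le hA hvert hrank hc] with r hr
  refine (measure_mono ?_).trans hr
  rintro _ ⟨y, ⟨hyr, hyE⟩, rfl⟩
  exact ⟨y, hyr, congrArg f (hefix y hyE)⟩

theorem heisenberg_pure_unrectifiable_general (hV : n < finrank ℝ V)
    (hf : ∀ y ∈ E, ∀ w ∈ E, dK n (f y) (f w) ≤ L * dist y w) :
    IsHausdorffNullK n (finrank ℝ V) (f '' E) := by
  borelize V
  let μ : Measure V := Measure.addHaar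
  have hlip : LipschitzOnWith L (fun y => piH n (f y)) E :=
    LipschitzOnWith.of_dist_le_mul fun y hy w hw => by
      rw [dist_eq_norm]
      exact (norm_piH_sub_le_dK _ _).trans (hf y hy w hw)
  let F : OuterMeasure V := OuterMeasure.restrict E
    (OuterMeasure.comap f (hausdorffContent n (finrank ℝ V)))
  have hF : ∀ S, F S = hausdorffContent n (finrank ℝ V) (f '' (S ∩ E)) := fun S => by
    rw [OuterMeasure.restrict_apply, OuterMeasure.comap_apply]
  have hFE : F E = 0 := by
    refine outerMeasure_eq_zero_of_ae_frequently μ (C := (2 * L) ^ finrank ℝ V)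
      (fun x _ => Frequently.of_forall fun r => ?_) ?_
    · rw [hF]
      exact hausdorffContent_image_inter_closedBall_le hf
    filter_upwards [hlip.ae_differentiableWithinAt_of_mem (μ := μ), ae_infDist_isLittleO_dist μ E]
      with x hdiff hdensity hx c hc
    simp only [hF]
    exact (eventually_hausdorffContent_image_inter_le hV hf hx (hdensity hx) (hdiff hx)
      hc).frequently
  refine isHausdorffNullK_of_hausdorffContent_eq_zero (Nat.ne_zero_of_lt hV) ?_
  rwa [hF, inter_self] at hFE

end PureUnrectifiability

/-- If `k > n ≥ 1`, `E ⊆ ℝ^k` is measurable and `f : E → (ℝ^{2n+1}, d_K)`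
is Lipschitz, then `f(E)` is null for the `k`-dimensional Hausdorff measure of `d_K`. -/
theorem heisenberg_pure_unrectifiable (n k : ℕ) (hn : 0 < n) (hk : n < k)
    (E : Set (EuclideanSpace ℝ (Fin k))) (hE : MeasurableSet E)
    (f : EuclideanSpace ℝ (Fin k) → Heis n)
    (hf : LipschitzOnK n f E) :
    IsHausdorffNullK n k (f '' E) := by
  obtain ⟨L, hL, hf⟩ := hf
  lift L to ℝ≥0 using hL
  simpa using heisenberg_pure_unrectifiable_general (by simpa using hk) hf
end

section
/- Let X be a complete geodesic metric space, let a < b be real numbers, let K ⊆ [a,b] be any subset, and let f : K → X be an L-Lipschitz map. Then there exists an L-Lipschitz map F : [a,b] → X that agrees with f on K. -/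
open MeasureTheory Metric Set
open scoped ENNReal NNReal

/-- A metric space is geodesic if any two points are joined by a curve
parameterized by arc-length realizing the distance. -/
def IsGeodesicSpace (X : Type*) [MetricSpace X] : Prop :=
  ∀ x y : X, ∃ γ : ℝ → X, γ 0 = x ∧ γ (dist x y) = y ∧
    ∀ s ∈ Set.Icc (0:ℝ) (dist x y), ∀ t ∈ Set.Icc (0:ℝ) (dist x y),
      dist (γ s) (γ t) = |s - t|

/-!
By a maximality argument it suffices to extend a Lipschitz map `f` from a set of reals to one
further point `t`. Completeness lets us assume that the set is closed; let `p` and `q` be its points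
closest to `t` from the left and from the right. A common point of the closed balls of radius
`L * |p - t|` around `f p` and `L * |q - t|` around `f q` exists on a geodesic from `f p` to `f q`,
and it is an admissible value at `t`: for any other point `k` of the set, `p` or `q` lies between
`k` and `t`, and the triangle inequality through its image is sharp enough. If the set has no point
on one side of `t`, take `p = q`.
-/

section Extension

variable {α X : Type*} [PseudoEMetricSpace α] [EMetricSpace X] {L : ℝ≥0} {f : α → X} {K : Set α}

theorem exists_lipschitzOnWith_closure_eqOn [CompleteSpace X] (hf : LipschitzOnWith L f K) :
    ∃ g : α → X, LipschitzOnWith L g (closure K) ∧ EqOn g f K := by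
  have hgf : EqOn (extendFrom K f) f K := extendFrom_extends hf.continuousOn
  have hlim : ∀ x ∈ closure K, ∃ y, Filter.Tendsto f (nhdsWithin x K) (nhds y) := fun x hx =>
    have := mem_closure_iff_nhdsWithin_neBot.1 hx
    CompleteSpace.complete
      ((cauchy_nhds.mono nhdsWithin_le_nhds).map_of_le hf.uniformContinuousOn inf_le_right)
  have hg : LipschitzOnWith L (extendFrom K f) K := fun x hx y hy => by
    rw [hgf hx, hgf hy]
    exact hf hx hy
  exact ⟨extendFrom K f, hg.closure (continuousOn_extendFrom Subset.rfl hlim), hgf⟩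

theorem exists_lipschitzWith_eqOn_of_forall_exists_edist_le
    (hext : ∀ (g : α → X) (S : Set α), LipschitzOnWith L g S →
      ∀ t, ∃ z, ∀ s ∈ S, edist (g s) z ≤ L * edist s t)
    (hf : LipschitzOnWith L f K) : ∃ F : α → X, LipschitzWith L F ∧ EqOn F f K := by
  -- Graphs of `L`-Lipschitz maps are the chains of this symmetric relation, so Hausdorff's
  -- maximality principle for chains provides a maximal partial extension.
  let r : α × X → α × X → Prop := fun p q => edist p.2 q.2 ≤ L * edist p.1 q.1
  have r_symm : ∀ {p q}, r p q → r q p := fun {p q} h => by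
    simpa only [r, edist_comm q.1, edist_comm q.2] using h
  have hgraph : IsChain r ((fun x => (x, f x)) '' K) := by
    rintro _ ⟨x, hx, rfl⟩ _ ⟨y, hy, rfl⟩ -
    exact Or.inl (hf hx hy)
  obtain ⟨M, ⟨hchain, hmax⟩, hfM⟩ := hgraph.exists_maxChain
  have hM : ∀ {p q}, p ∈ M → q ∈ M → r p q := fun {p q} hp hq => by
    rcases eq_or_ne p q with rfl | hpq
    · simp [r]
    · exact (hchain hp hq hpq).elim id r_symm
  have hM_unique : ∀ {x y z}, (x, y) ∈ M → (x, z) ∈ M → y = z := fun hy hz =>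
    edist_le_zero.1 (by simpa [r] using hM hy hz)
  have hM_total : ∀ t, ∃ z, (t, z) ∈ M := fun t => by
    have : Nonempty X := ⟨f t⟩
    choose! g hg using fun s (hs : ∃ y, (s, y) ∈ M) => hs
    obtain ⟨z, hz⟩ := hext g {s | ∃ y, (s, y) ∈ M} (fun x hx y hy => hM (hg x hx) (hg y hy)) t
    have hinsert : IsChain r (insert (t, z) M) := hchain.insert fun ⟨s, y⟩ hs _ => by
      rw [hM_unique hs (hg s ⟨y, hs⟩)]
      exact Or.inr (hz s ⟨y, hs⟩)
    exact ⟨z, hmax hinsert (subset_insert _ _) ▸ mem_insert _ _⟩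
  choose F hF using hM_total
  exact ⟨F, fun x y => hM (hF x) (hF y), fun x hx => hM_unique (hF x) (hfM ⟨x, hx, rfl⟩)⟩

end Extension

theorem exists_forall_mem_uIcc_of_isClosed {α : Type*} [ConditionallyCompleteLinearOrder α]
    [TopologicalSpace α] [OrderTopology α] {C : Set α} (hC : IsClosed C) (hne : C.Nonempty)
    (t : α) : ∃ p ∈ C, ∃ q ∈ C, ∀ c ∈ C, p ∈ uIcc c t ∨ q ∈ uIcc c t := by
  have hleft (h : (C ∩ Iic t).Nonempty) : ∃ p ∈ C, ∀ c ∈ C, c ≤ t → p ∈ uIcc c t :=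
    have hp := (hC.inter isClosed_Iic).isGreatest_csSup h (bddAbove_Iic.mono inter_subset_right)
    ⟨_, hp.1.1, fun c hc hct => Icc_subset_uIcc ⟨hp.2 ⟨hc, hct⟩, hp.1.2⟩⟩
  have hright (h : (C ∩ Ici t).Nonempty) : ∃ q ∈ C, ∀ c ∈ C, t ≤ c → q ∈ uIcc c t :=
    have hq := (hC.inter isClosed_Ici).isLeast_csInf h (bddBelow_Ici.mono inter_subset_right)
    ⟨_, hq.1.1, fun c hc htc => Icc_subset_uIcc' ⟨hq.1.2, hq.2 ⟨hc, htc⟩⟩⟩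
  by_cases hl : (C ∩ Iic t).Nonempty <;> by_cases hr : (C ∩ Ici t).Nonempty
  · obtain ⟨p, hpC, hp⟩ := hleft hl
    obtain ⟨q, hqC, hq⟩ := hright hr
    exact ⟨p, hpC, q, hqC, fun c hc => (le_total c t).imp (hp c hc) (hq c hc)⟩
  · obtain ⟨p, hpC, hp⟩ := hleft hl
    exact ⟨p, hpC, p, hpC, fun c hc =>
      Or.inl (hp c hc (not_le.1 fun htc => hr ⟨c, hc, htc⟩).le)⟩
  · obtain ⟨q, hqC, hq⟩ := hright hr
    exact ⟨q, hqC, q, hqC, fun c hc =>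
      Or.inr (hq c hc (not_le.1 fun hct => hl ⟨c, hc, hct⟩).le)⟩
  · obtain ⟨c, hc⟩ := hne
    exact ((le_total c t).elim (fun h => hl ⟨c, hc, h⟩) fun h => hr ⟨c, hc, h⟩).elim

theorem dist_le_mul_dist_of_dist_add_dist_eq {α X : Type*} [PseudoMetricSpace α]
    [PseudoMetricSpace X] {L : ℝ≥0} {f : α → X} {K : Set α} (hf : LipschitzOnWith L f K)
    {k p t : α} (hk : k ∈ K) (hp : p ∈ K) (hkpt : dist k p + dist p t = dist k t) {z : X}
    (hz : dist (f p) z ≤ L * dist p t) : dist (f k) z ≤ L * dist k t :=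
  calc
    dist (f k) z ≤ dist (f k) (f p) + dist (f p) z := dist_triangle _ _ _
    _ ≤ L * dist k p + L * dist p t := add_le_add (hf.dist_le_mul k hk p hp) hz
    _ = L * dist k t := by rw [← mul_add, hkpt]

namespace IsGeodesicSpace

variable {X : Type*} [MetricSpace X]

theorem exists_dist_le_le (hX : IsGeodesicSpace X) {x y : X} {r s : ℝ} (hr : 0 ≤ r)
    (hs : 0 ≤ s) (hxy : dist x y ≤ r + s) : ∃ z, dist x z ≤ r ∧ dist y z ≤ s := by
  obtain ⟨γ, hγ₀, hγ₁, hγ⟩ := hX x y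
  have hmin : min r (dist x y) ∈ Icc 0 (dist x y) := ⟨le_min hr dist_nonneg, min_le_right _ _⟩
  have hxz : dist x (γ (min r (dist x y))) = min r (dist x y) := by
    simpa only [hγ₀, zero_sub, abs_neg, abs_of_nonneg hmin.1] using
      hγ 0 ⟨le_rfl, dist_nonneg⟩ _ hmin
  have hyz : dist y (γ (min r (dist x y))) = dist x y - min r (dist x y) := by
    simpa only [hγ₁, abs_of_nonneg (sub_nonneg.2 hmin.2)] using
      hγ (dist x y) ⟨dist_nonneg, le_rfl⟩ _ hmin
  refine ⟨γ (min r (dist x y)), hxz.trans_le (min_le_left _ _), hyz.trans_le ?_⟩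
  rcases min_choice r (dist x y) with h | h <;> rw [h] <;> linarith

theorem exists_forall_dist_le_mul_dist [CompleteSpace X] (hX : IsGeodesicSpace X) {L : ℝ≥0}
    {f : ℝ → X} {K : Set ℝ} (hf : LipschitzOnWith L f K) (t : ℝ) :
    ∃ z, ∀ k ∈ K, dist (f k) z ≤ L * dist k t := by
  rcases K.eq_empty_or_nonempty with rfl | hne
  · exact ⟨f t, fun _ => False.elim⟩
  obtain ⟨g, hg, hgf⟩ := exists_lipschitzOnWith_closure_eqOn hf
  obtain ⟨p, hp, q, hq, hpq⟩ := exists_forall_mem_uIcc_of_isClosed isClosed_closure hne.closure t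
  have hgpq : dist (g p) (g q) ≤ L * dist p t + L * dist q t :=
    calc
      dist (g p) (g q) ≤ L * dist p q := hg.dist_le_mul p hp q hq
      _ ≤ L * (dist p t + dist q t) := by gcongr; exact dist_triangle_right _ _ _
      _ = L * dist p t + L * dist q t := mul_add _ _ _
  obtain ⟨z, hpz, hqz⟩ := hX.exists_dist_le_le (by positivity) (by positivity) hgpq
  have hz : ∀ c ∈ closure K, ∀ s ∈ closure K, s ∈ uIcc c t → dist (g s) z ≤ L * dist s t →
      dist (g c) z ≤ L * dist c t := fun c hc s hs hcst =>
    dist_le_mul_dist_of_dist_add_dist_eq hg hc hs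
      (dist_add_dist_of_mem_segment (segment_eq_uIcc c t ▸ hcst))
  refine ⟨z, fun k hk => ?_⟩
  have hkC := subset_closure hk
  rw [← hgf hk]
  exact (hpq k hkC).elim (fun h => hz k hkC p hp h hpz) fun h => hz k hkC q hq h hqz

end IsGeodesicSpace

theorem lipschitz_extension_interval_general {X : Type*} [MetricSpace X] [CompleteSpace X]
    (hX : IsGeodesicSpace X) {K : Set ℝ} {L : ℝ≥0} {f : ℝ → X} (hf : LipschitzOnWith L f K) :
    ∃ F : ℝ → X, LipschitzWith L F ∧ EqOn F f K := by
  refine exists_lipschitzWith_eqOn_of_forall_exists_edist_le (fun g S hg t => ?_) hf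
  obtain ⟨z, hz⟩ := hX.exists_forall_dist_le_mul_dist hg t
  refine ⟨z, fun s hs => ?_⟩
  simp only [edist_nndist]
  exact_mod_cast hz s hs

/-- An `L`-Lipschitz map from an arbitrary subset `K` of `[a,b]` to a
complete geodesic metric space extends to an `L`-Lipschitz map on `[a,b]`. -/
theorem lipschitz_extension_interval {X : Type*} [MetricSpace X] [CompleteSpace X]
    (hX : IsGeodesicSpace X) (a b : ℝ) (hab : a < b)
    (K : Set ℝ) (hK : K ⊆ Set.Icc a b)
    (L : ℝ≥0) (f : ℝ → X) (hf : LipschitzOnWith L f K) :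
    ∃ F : ℝ → X, LipschitzOnWith L F (Set.Icc a b) ∧ Set.EqOn F f K := by
  obtain ⟨F, hF, hFf⟩ := lipschitz_extension_interval_general hX hf
  exact ⟨F, hF.lipschitzOnWith, hFf⟩
end

section
/- Let X be a complete geodesic metric space, let S ⊆ ℝ² be a circle (the boundary of a Euclidean disc), equipped with the metric inherited from ℝ², let K ⊆ S be any subset, and let f : K → X be an L-Lipschitz map. Then there exists an (Lπ/2)-Lipschitz map F : S → X that agrees with f on K. -/
open MeasureTheory Metric Set
open scoped ENNReal NNReal

/-! A point of the circle outside a closed set lies in a gap, and sending it to the right place on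
a geodesic joining the images of the endpoints of the gap keeps the Lipschitz constant with respect
to arc length. By Zorn's lemma, Lipschitz maps from subsets of the circle with its arc-length
metric into a complete geodesic space therefore extend with the same constant. Passing from the
chordal metric to arc length does not increase the Lipschitz constant, and passing back costs the
factor `π / 2`, since an arc of length at most `π` is at most `π / 2` times its chord. -/

section Extension

variable {X Y : Type*} [EMetricSpace X] [PseudoEMetricSpace Y] {C : ℝ≥0} {A : Set Y} {g : Y → X}

theorem exists_lipschitzOnWith_closure_extension [CompleteSpace X] (hg : LipschitzOnWith C g A) :
    ∃ G : Y → X, LipschitzOnWith C G (closure A) ∧ EqOn G g A := by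
  have hlim : ∀ y ∈ closure A, ∃ z, Filter.Tendsto g (nhdsWithin y A) (nhds z) := fun y hy ↦ by
    have := mem_closure_iff_nhdsWithin_neBot.1 hy
    have hy_cauchy : Cauchy (nhdsWithin y A) := cauchy_nhds.mono nhdsWithin_le_nhds
    exact cauchy_map_iff_exists_tendsto.1 (hy_cauchy.map_of_le hg.uniformContinuousOn inf_le_right)
  have hextends : EqOn (extendFrom A g) g A := extendFrom_extends hg.continuousOn
  refine ⟨extendFrom A g, .closure (continuousOn_extendFrom subset_rfl hlim) ?_, hextends⟩
  exact fun a ha b hb ↦ by simpa only [hextends ha, hextends hb] using hg ha hb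

/-- Lipschitz relations with constant `C`, as sets of pairs: the graphs of `C`-Lipschitz maps
defined on subsets of `Y`. Graphs make extension of partial maps into inclusion, to which Zorn's
lemma applies. -/
def IsLipschitzGraph (C : ℝ≥0) (Γ : Set (Y × X)) : Prop :=
  ∀ p ∈ Γ, ∀ q ∈ Γ, edist p.2 q.2 ≤ C * edist p.1 q.1

theorem isLipschitzGraph_graphOn : IsLipschitzGraph C (A.graphOn g) ↔ LipschitzOnWith C g A := by
  simp [IsLipschitzGraph, LipschitzOnWith]

namespace IsLipschitzGraph

variable {Γ : Set (Y × X)}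

theorem eq_of_mem (hΓ : IsLipschitzGraph C Γ) {y : Y} {x x' : X} (hx : (y, x) ∈ Γ)
    (hx' : (y, x') ∈ Γ) : x = x' :=
  edist_le_zero.1 (by simpa using hΓ _ hx _ hx')

theorem exists_eq_graphOn [Nonempty X] (hΓ : IsLipschitzGraph C Γ) :
    ∃ (g : Y → X) (A : Set Y), Γ = A.graphOn g ∧ LipschitzOnWith C g A := by
  have hinj : InjOn Prod.fst Γ := by
    rintro ⟨y, x⟩ hx ⟨_, x'⟩ hx' rfl
    rw [hΓ.eq_of_mem hx hx']
  obtain ⟨g, A, rfl⟩ := Set.exists_eq_graphOn.2 hinj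
  exact ⟨g, A, rfl, isLipschitzGraph_graphOn.1 hΓ⟩

theorem insert (hΓ : IsLipschitzGraph C Γ) {y : Y} {z : X}
    (hz : ∀ p ∈ Γ, edist z p.2 ≤ C * edist y p.1) : IsLipschitzGraph C (insert (y, z) Γ) := by
  rintro p (rfl | hp) q (rfl | hq)
  · simp
  · exact hz q hq
  · simpa only [edist_comm] using hz p hp
  · exact hΓ p hp q hq

theorem exists_maximal (hΓ : IsLipschitzGraph C Γ) :
    ∃ Δ, Γ ⊆ Δ ∧ Maximal (IsLipschitzGraph C) Δ := by
  refine zorn_subset_nonempty {Δ | IsLipschitzGraph C Δ} (fun c hc hchain _ ↦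
    ⟨⋃₀ c, ?_, fun _ ↦ subset_sUnion_of_mem⟩) Γ hΓ
  rintro p ⟨Δ₁, hΔ₁, hp⟩ q ⟨Δ₂, hΔ₂, hq⟩
  rcases hchain.total hΔ₁ hΔ₂ with hle | hle
  · exact hc hΔ₂ p (hle hp) q hq
  · exact hc hΔ₁ p hp q (hle hq)

end IsLipschitzGraph

theorem exists_lipschitzWith_extension_of_forall_exists_edist_le
    (hpoint : ∀ (A : Set Y) (g : Y → X), LipschitzOnWith C g A →
      ∀ y, ∃ z, ∀ a ∈ A, edist z (g a) ≤ C * edist y a)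
    (hg : LipschitzOnWith C g A) :
    ∃ G : Y → X, LipschitzWith C G ∧ EqOn G g A := by
  obtain ⟨Γ, hgΓ, hΓ⟩ := (isLipschitzGraph_graphOn.2 hg).exists_maximal
  have htotal : ∀ y, ∃ z, (y, z) ∈ Γ := by
    intro y
    have : Nonempty X := ⟨g y⟩
    obtain ⟨g', B, rfl, hg'⟩ := hΓ.prop.exists_eq_graphOn
    obtain ⟨z, hz⟩ := hpoint B g' hg' y
    have hinsert := hΓ.prop.insert (y := y) (z := z) (by rintro _ ⟨b, hb, rfl⟩; exact hz b hb)
    exact ⟨z, hΓ.le_of_ge hinsert (subset_insert _ _) (mem_insert _ _)⟩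
  choose G hG using htotal
  exact ⟨G, fun a b ↦ hΓ.prop _ (hG a) _ (hG b),
    fun a ha ↦ hΓ.prop.eq_of_mem (hG a) (hgΓ ⟨a, ha, rfl⟩)⟩

end Extension

section AddCircle

variable {T : ℝ}

theorem exists_coe_eq_dist_eq_dist_coe (t : ℝ) (x : AddCircle T) :
    ∃ s : ℝ, (s : AddCircle T) = x ∧ dist t s = dist (t : AddCircle T) x := by
  obtain ⟨u, rfl⟩ := QuotientAddGroup.mk_surjective x
  let n := round (T⁻¹ * (t - u))
  refine ⟨u + n * T, ?_, ?_⟩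
  · rw [← zsmul_eq_mul, AddCircle.coe_add, AddCircle.coe_zsmul, AddCircle.coe_period, smul_zero,
      add_zero]
  · rw [dist_eq_norm (t : AddCircle T), ← AddCircle.coe_sub, AddCircle.norm_eq, Real.dist_eq,
      sub_add_eq_sub_sub]

theorem lipschitzWith_one_coe_addCircle : LipschitzWith 1 ((↑) : ℝ → AddCircle T) :=
  LipschitzWith.of_dist_le_mul fun s t ↦ by
    simpa [dist_eq_norm] using
      QuotientAddGroup.norm_mk_le_norm (S := AddSubgroup.zmultiples T) (m := s - t)

end AddCircle

namespace IsGeodesicSpace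

variable {X : Type*} [MetricSpace X]

theorem exists_dist_le_dist_le (hX : IsGeodesicSpace X) {x y : X} {a b : ℝ} (ha : 0 ≤ a)
    (hb : 0 ≤ b) (hxy : dist x y ≤ a + b) : ∃ z, dist z x ≤ a ∧ dist z y ≤ b := by
  obtain ⟨γ, rfl, hγy, hγ⟩ := hX x y
  have hmem : min a (dist (γ 0) y) ∈ Icc 0 (dist (γ 0) y) :=
    ⟨le_min ha dist_nonneg, min_le_right _ _⟩
  refine ⟨γ (min a (dist (γ 0) y)), ?_, ?_⟩
  · rw [hγ _ hmem 0 (left_mem_Icc.2 dist_nonneg), sub_zero, abs_of_nonneg hmem.1]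
    exact min_le_left _ _
  · nth_rw 2 [← hγy]
    rw [hγ _ hmem _ (right_mem_Icc.2 dist_nonneg), abs_sub_comm,
      abs_of_nonneg (sub_nonneg.2 hmem.2)]
    grind

variable [CompleteSpace X] {C L : ℝ≥0} {T : ℝ}

theorem exists_forall_dist_le_of_mem_Icc (hX : IsGeodesicSpace X) {B : Set ℝ} {h : ℝ → X}
    (hh : LipschitzOnWith C h B) {p q t : ℝ} (hp : p ∈ B) (hq : q ∈ B) (ht : t ∈ Icc p q) :
    ∃ z, ∀ b ∈ B, dist z (h b) ≤ C * dist t b := by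
  obtain ⟨h', hh', hEq⟩ := exists_lipschitzOnWith_closure_extension hh
  obtain ⟨⟨hlB, hlt⟩, hl⟩ := (isClosed_closure.inter isClosed_Iic).isGreatest_csSup
    ⟨p, subset_closure hp, ht.1⟩ (bddAbove_Iic.mono inter_subset_right)
  obtain ⟨⟨hrB, htr⟩, hr⟩ := (isClosed_closure.inter isClosed_Ici).isLeast_csInf
    ⟨q, subset_closure hq, ht.2⟩ (bddBelow_Ici.mono inter_subset_right)
  set l := sSup (closure B ∩ Iic t)
  set r := sInf (closure B ∩ Ici t)
  have hadd {u v w : ℝ} (hv : v ∈ uIcc u w) : C * dist u v + C * dist v w = C * dist u w := by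
    rw [← mul_add, dist_add_dist_of_mem_segment (segment_eq_uIcc u w ▸ hv)]
  have hgap : dist (h' l) (h' r) ≤ C * dist t l + C * dist t r := by
    rw [dist_comm t l, hadd (mem_uIcc_of_le hlt htr)]
    exact hh'.dist_le_mul l hlB r hrB
  obtain ⟨z, hzl, hzr⟩ := hX.exists_dist_le_dist_le (by positivity) (by positivity) hgap
  have hvia {e b : ℝ} (hz : dist z (h' e) ≤ C * dist t e) (he : e ∈ closure B)
      (hb : b ∈ closure B) (heb : e ∈ uIcc t b) : dist z (h' b) ≤ C * dist t b :=
    calc dist z (h' b) ≤ dist z (h' e) + dist (h' e) (h' b) := dist_triangle _ _ _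
      _ ≤ C * dist t e + C * dist e b := add_le_add hz (hh'.dist_le_mul e he b hb)
      _ = C * dist t b := hadd heb
  refine ⟨z, fun b hb ↦ ?_⟩
  have hbB : b ∈ closure B := subset_closure hb
  rw [← hEq hb]
  rcases le_total b t with hbt | htb
  · exact hvia hzl hlB hbB (mem_uIcc_of_ge (hl ⟨hbB, hbt⟩) hlt)
  · exact hvia hzr hrB hbB (mem_uIcc_of_le htr (hr ⟨hbB, htb⟩))

theorem exists_forall_dist_le_addCircle (hX : IsGeodesicSpace X) [Nonempty X] [Fact (0 < T)]
    {A : Set (AddCircle T)} {g : AddCircle T → X} (hg : LipschitzOnWith C g A) (x : AddCircle T) :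
    ∃ z, ∀ a ∈ A, dist z (g a) ≤ C * dist x a := by
  rcases A.eq_empty_or_nonempty with rfl | ⟨a₀, ha₀⟩
  · simp
  obtain ⟨p, rfl⟩ := QuotientAddGroup.mk_surjective a₀
  obtain ⟨t, ht, rfl⟩ := (AddCircle.coe_image_Icc_eq T p).ge (mem_univ x)
  have hlift : LipschitzOnWith C (g ∘ (↑)) ((↑) ⁻¹' A : Set ℝ) := by
    simpa using hg.comp lipschitzWith_one_coe_addCircle.lipschitzOnWith (mapsTo_preimage _ A)
  have hpT : ((p + T : ℝ) : AddCircle T) ∈ A := by rwa [AddCircle.coe_add_period]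
  obtain ⟨z, hz⟩ := hX.exists_forall_dist_le_of_mem_Icc hlift ha₀ hpT ht
  refine ⟨z, fun a ha ↦ ?_⟩
  obtain ⟨s, rfl, hst⟩ := exists_coe_eq_dist_eq_dist_coe t a
  exact (hz s ha).trans_eq (by rw [hst])

theorem exists_lipschitzWith_extension_addCircle (hX : IsGeodesicSpace X) [Nonempty X]
    [Fact (0 < T)] {A : Set (AddCircle T)} {g : AddCircle T → X} (hg : LipschitzOnWith C g A) :
    ∃ G : AddCircle T → X, LipschitzWith C G ∧ EqOn G g A := by
  refine exists_lipschitzWith_extension_of_forall_exists_edist_le (fun A g hg x ↦ ?_) hg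
  obtain ⟨z, hz⟩ := hX.exists_forall_dist_le_addCircle hg x
  refine ⟨z, fun a ha ↦ ?_⟩
  rw [edist_nndist, edist_nndist]
  exact_mod_cast hz a ha

theorem exists_lipschitzOnWith_extension_range (hX : IsGeodesicSpace X) {Y : Type*}
    [PseudoMetricSpace Y] [Fact (0 < T)] {p : AddCircle T → Y} {a b : ℝ≥0}
    (hp : LipschitzWith a p) (hp' : AntilipschitzWith b p) {K : Set Y} (hK : K ⊆ range p)
    {f : Y → X} (hf : LipschitzOnWith L f K) :
    ∃ F : Y → X, LipschitzOnWith (L * a * b) F (range p) ∧ EqOn F f K := by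
  have : Nonempty X := ⟨f (p 0)⟩
  obtain ⟨G, hG, hGf⟩ := hX.exists_lipschitzWith_extension_addCircle
    (hf.comp hp.lipschitzOnWith (mapsTo_preimage p K))
  have hinv : RightInvOn (Function.invFun p) p (range p) := fun _ hy ↦ Function.invFun_eq hy
  refine ⟨G ∘ Function.invFun p, ?_, fun y hy ↦ ?_⟩
  · exact hG.comp_lipschitzOnWith (lipschitzOnWith_iff_restrict.2 (hp'.to_rightInvOn hinv))
  · have hy' : p (Function.invFun p y) = y := hinv (hK hy)
    exact (hGf (by rwa [mem_preimage, hy'])).trans (congrArg f hy')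

end IsGeodesicSpace

section Circle

theorem addCircle_dist_le_pi (θ φ : AddCircle (2 * Real.pi)) : dist θ φ ≤ Real.pi := by
  have h := AddCircle.norm_le_half_period (2 * Real.pi) (x := θ - φ) Real.two_pi_pos.ne'
  rwa [abs_of_pos Real.two_pi_pos, mul_div_cancel_left₀ _ two_ne_zero, ← dist_eq_norm] at h

theorem dist_homeomorphCircle' (θ φ : AddCircle (2 * Real.pi)) :
    dist (AddCircle.homeomorphCircle' θ : ℂ) (AddCircle.homeomorphCircle' φ) =
      2 * Real.sin (dist θ φ / 2) := by
  obtain ⟨s, rfl⟩ := QuotientAddGroup.mk_surjective θ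
  obtain ⟨t, rfl, hst⟩ := exists_coe_eq_dist_eq_dist_coe s φ
  have hle : |(s - t) / 2| ≤ Real.pi := by
    rw [abs_div, abs_two, ← Real.dist_eq, hst]
    linarith [addCircle_dist_le_pi s t, Real.pi_pos]
  calc dist (Circle.exp s : ℂ) (Circle.exp t)
      = ‖(Circle.exp t : ℂ) * (Complex.exp (Complex.I * ↑(s - t)) - 1)‖ := by
        rw [dist_eq_norm, Circle.coe_exp, Circle.coe_exp, mul_sub, ← Complex.exp_add, mul_one]
        congr 3
        push_cast
        ring
    _ = 2 * |Real.sin ((s - t) / 2)| := by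
        rw [norm_mul, Circle.norm_coe, one_mul, Complex.norm_exp_I_mul_ofReal_sub_one, norm_mul,
          Real.norm_two, Real.norm_eq_abs]
    _ = 2 * Real.sin (dist (s : AddCircle (2 * Real.pi)) t / 2) := by
        rw [Real.abs_sin_eq_sin_abs_of_abs_le_pi hle, abs_div, abs_two, ← Real.dist_eq, hst]

variable (c : EuclideanSpace ℝ (Fin 2)) (r : ℝ≥0)

/-- The parametrization by angle of the circle with centre `c` and radius `r`. Angles are points of
`AddCircle (2 * π)`, whose metric is arc length on the unit circle. -/
noncomputable def circleParam (θ : AddCircle (2 * Real.pi)) : EuclideanSpace ℝ (Fin 2) :=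
  c + (r : ℝ) • Complex.orthonormalBasisOneI.repr (AddCircle.homeomorphCircle' θ)

theorem dist_circleParam (θ φ : AddCircle (2 * Real.pi)) :
    dist (circleParam c r θ) (circleParam c r φ) = r * (2 * Real.sin (dist θ φ / 2)) := by
  rw [circleParam, circleParam, dist_add_left, dist_smul₀, LinearIsometryEquiv.dist_map,
    dist_homeomorphCircle', NNReal.norm_eq]

open scoped Pointwise in
theorem range_circleParam : range (circleParam c r) = sphere c r := by
  have hcircle : range (fun θ ↦ (AddCircle.homeomorphCircle' θ : ℂ)) = sphere 0 1 :=
    (AddCircle.homeomorphCircle'.surjective.range_comp _).trans Subtype.range_coe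
  calc range (circleParam c r)
      = c +ᵥ (r : ℝ) • (Complex.orthonormalBasisOneI.repr '' sphere (0 : ℂ) 1) := by
        rw [← hcircle, ← range_comp, smul_set_range, vadd_set_range]
        rfl
    _ = sphere c r := by
        rw [LinearIsometryEquiv.image_sphere, _root_.smul_sphere _ _ zero_le_one, vadd_sphere,
          map_zero, smul_zero, vadd_eq_add, add_zero, NNReal.norm_eq, mul_one]

theorem lipschitzWith_circleParam : LipschitzWith r (circleParam c r) := by
  refine LipschitzWith.of_dist_le_mul fun θ φ ↦ ?_
  rw [dist_circleParam]
  gcongr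
  linarith [Real.sin_le (x := dist θ φ / 2) (by positivity)]

theorem antilipschitzWith_circleParam {r : ℝ≥0} (hr : r ≠ 0) :
    AntilipschitzWith (NNReal.pi / 2 / r) (circleParam c r) := by
  refine AntilipschitzWith.of_le_mul_dist fun θ φ ↦ ?_
  have hjordan : 2 / Real.pi * (dist θ φ / 2) ≤ Real.sin (dist θ φ / 2) :=
    Real.mul_le_sin (by positivity) (by linarith [addCircle_dist_le_pi θ φ])
  rw [dist_circleParam]
  calc dist θ φ = Real.pi / 2 / r * (r * (2 * (2 / Real.pi * (dist θ φ / 2)))) := by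
        field_simp
    _ ≤ Real.pi / 2 / r * (r * (2 * Real.sin (dist θ φ / 2))) := by gcongr

end Circle

/-- An `L`-Lipschitz map from a subset `K` of a circle `S ⊆ ℝ²`
(with the chordal metric) into a complete geodesic metric space extends to an
`(Lπ/2)`-Lipschitz map on `S`. -/
theorem lipschitz_extension_circle {X : Type*} [MetricSpace X] [CompleteSpace X]
    (hX : IsGeodesicSpace X)
    (c : EuclideanSpace ℝ (Fin 2)) (r : ℝ) (hr : 0 < r)
    (K : Set (EuclideanSpace ℝ (Fin 2))) (hK : K ⊆ Metric.sphere c r)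
    (L : ℝ) (hL : 0 ≤ L) (f : EuclideanSpace ℝ (Fin 2) → X)
    (hf : ∀ x ∈ K, ∀ y ∈ K, dist (f x) (f y) ≤ L * dist x y) :
    ∃ F : EuclideanSpace ℝ (Fin 2) → X,
      (∀ x ∈ Metric.sphere c r, ∀ y ∈ Metric.sphere c r,
        dist (F x) (F y) ≤ (L * Real.pi / 2) * dist x y) ∧
      Set.EqOn F f K := by
  lift r to ℝ≥0 using hr.le
  lift L to ℝ≥0 using hL
  have : Fact (0 < 2 * Real.pi) := ⟨Real.two_pi_pos⟩
  have hr' : r ≠ 0 := by exact_mod_cast hr.ne'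
  rw [← range_circleParam] at hK ⊢
  obtain ⟨F, hF, hFf⟩ := hX.exists_lipschitzOnWith_extension_range (lipschitzWith_circleParam c r)
    (antilipschitzWith_circleParam c hr') hK (LipschitzOnWith.of_dist_le_mul hf)
  have hconst : (↑(L * r * (NNReal.pi / 2 / r)) : ℝ) = L * Real.pi / 2 := by
    push_cast
    field_simp
    simp
  exact ⟨F, hconst ▸ hF.dist_le_mul, hFf⟩
end
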